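/- Let O ⊆ ℝ^d be a bounded, connected, open set whose boundary is of class C², let p be a real number with p ≥ 2, and let λ > 0. Suppose u₁ and u₂ are real-valued functions, each continuous on the closure of O and twice continuously differentiable on O, and each u = u_i satisfies: Δu(x) − u(x)^{p−1} + λ u(x) = 0 for all x ∈ O; u(x) > 0 for all x ∈ O; u(x) = 0 for all x ∈ ∂O; and ∫_O u(x)² dx = 1. Then u₁ = u₂ on the closure of O. -/

import Mathlib

open MeasureTheory

/-- The Laplacian `Δu(x) = ∑ i, ∂²u/∂x_i²(x)` as the sum of second partial derivatives. -/
noncomputable def lap {d : ℕ} (u : EuclideanSpace ℝ (Fin d) → ℝ)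
    (x : EuclideanSpace ℝ (Fin d)) : ℝ :=
  ∑ i : Fin d, fderiv ℝ (fun y => fderiv ℝ u y (EuclideanSpace.single i (1 : ℝ))) x
    (EuclideanSpace.single i (1 : ℝ))

/-- An open set `O` has boundary of class `C²`: near each boundary point there is a `C²`
defining function with nonvanishing differential whose zero set is the boundary and
whose negativity set is `O` (a standard formulation of a `C²` boundary, equivalent to
the local flattening by a `C²` diffeomorphism). -/
def IsC2Boundary {d : ℕ} (O : Set (EuclideanSpace ℝ (Fin d))) : Prop :=
  ∀ x ∈ frontier O, ∃ U : Set (EuclideanSpace ℝ (Fin d)), IsOpen U ∧ x ∈ U ∧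
    ∃ ρ : EuclideanSpace ℝ (Fin d) → ℝ,
      ContDiffOn ℝ 2 ρ U ∧ (∀ y ∈ U, fderiv ℝ ρ y ≠ 0) ∧
      (∀ y ∈ U, (y ∈ O ↔ ρ y < 0)) ∧ (∀ y ∈ U, (y ∈ frontier O ↔ ρ y = 0))

theorem div_zero_aux {d : ℕ} {O K : Set (EuclideanSpace ℝ (Fin d))} (hO : IsOpen O)
    (hK : IsCompact K) (hKO : K ⊆ O) {f : EuclideanSpace ℝ (Fin d) → ℝ}
    (hf : ContDiffOn ℝ 1 f O) (hfK : ∀ x ∈ O, x ∉ K → f x = 0)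
    (e : EuclideanSpace ℝ (Fin d)) :
    IntegrableOn (fun x => fderiv ℝ f x e) O ∧ ∫ x in O, fderiv ℝ f x e = 0 := by
  classical
  set g := O.indicator f with hg
  have hgO : ∀ x ∈ O, g =ᶠ[nhds x] f := fun x hx => by
    filter_upwards [hO.mem_nhds hx] with y hy
    simp [hg, hy]
  have hgK : ∀ x, x ∉ K → g x = 0 := fun x hx => by
    by_cases hxO : x ∈ O
    · simp [hg, hxO, hfK x hxO hx]
    · simp [hg, hxO]
  have hgC : ContDiff ℝ 1 g := by
    rw [contDiff_iff_contDiffAt]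
    intro x
    by_cases hx : x ∈ O
    · exact (hf.contDiffAt (hO.mem_nhds hx)).congr_of_eventuallyEq (hgO x hx)
    · have hxK : x ∉ K := fun h => hx (hKO h)
      have : g =ᶠ[nhds x] fun _ => (0 : ℝ) := by
        filter_upwards [hK.isClosed.isOpen_compl.mem_nhds hxK] with y hy
        exact hgK y hy
      exact contDiffAt_const.congr_of_eventuallyEq this
  have hgs : HasCompactSupport g := HasCompactSupport.intro hK hgK
  have hc1 : Continuous (fun x => fderiv ℝ g x e) :=
    (hgC.continuous_fderiv one_ne_zero).clm_apply continuous_const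
  have hcs : HasCompactSupport (fun x => fderiv ℝ g x e) := hgs.fderiv_apply (𝕜 := ℝ) e
  have hint : Integrable (fun x => fderiv ℝ g x e) := hc1.integrable_of_hasCompactSupport hcs
  have hgint : Integrable g := hgC.continuous.integrable_of_hasCompactSupport hgs
  have hzero : ∫ x, fderiv ℝ g x e = 0 := by
    have := integral_mul_fderiv_eq_neg_fderiv_mul_of_integrable (𝕜 := ℝ) (μ := volume)
      (f := fun _ : EuclideanSpace ℝ (Fin d) => (1 : ℝ)) (g := g) (v := e)
      (by simp) (by simpa using hint) (by simpa using hgint)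
      (by simp) (fun x _ => hgC.differentiable one_ne_zero x)
    simpa using this
  have heq : Set.EqOn (fun x => fderiv ℝ g x e) (fun x => fderiv ℝ f x e) O := fun x hx => by
    simp only [(hgO x hx).fderiv_eq]
  have hout : ∀ x, x ∉ O → fderiv ℝ g x e = 0 := fun x hx => by
    have hxK : x ∉ K := fun h => hx (hKO h)
    have : g =ᶠ[nhds x] fun _ => (0 : ℝ) := by
      filter_upwards [hK.isClosed.isOpen_compl.mem_nhds hxK] with y hy
      exact hgK y hy
    rw [this.fderiv_eq]; simp
  refine ⟨(hint.integrableOn (s := O)).congr_fun heq hO.measurableSet, ?_⟩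
  rw [← setIntegral_congr_fun hO.measurableSet heq,
    setIntegral_eq_integral_of_forall_compl_eq_zero hout, hzero]

theorem cutoff_aux (ε : ℝ) (hε : 0 < ε) : ∃ φ φ' Ψ : ℝ → ℝ,
    ContDiff ℝ 1 φ ∧ ContDiff ℝ 1 Ψ ∧ Continuous φ' ∧
    (∀ s, HasDerivAt φ (φ' s) s) ∧ (∀ s, HasDerivAt Ψ (s * φ' s) s) ∧
    (∀ s, 0 ≤ φ' s) ∧ (∀ s, 0 ≤ φ s) ∧ (∀ s, s ≤ ε → φ s = 0) ∧ (∀ s, 2 * ε ≤ s → φ s = 1) ∧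
    (∀ s, s ≤ ε → Ψ s = 0) ∧ (∀ s, 0 ≤ Ψ s) ∧ (∀ s, Ψ s ≤ 2 * ε) := by
  set φ : ℝ → ℝ := fun s => Real.smoothTransition (s / ε - 1) with hφ
  have hC : ContDiff ℝ 1 φ := Real.smoothTransition.contDiff.comp (by fun_prop)
  have hmono : Monotone φ := fun a b hab => by
    apply Real.smoothTransition.monotone
    have : a / ε ≤ b / ε := by gcongr
    linarith
  have h0 : ∀ s, s ≤ ε → φ s = 0 := fun s hs => by
    apply Real.smoothTransition.zero_of_nonpos
    have : s / ε ≤ 1 := by rw [div_le_one hε]; exact hs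
    linarith
  have h1 : ∀ s, 2 * ε ≤ s → φ s = 1 := fun s hs => by
    apply Real.smoothTransition.one_of_one_le
    have : 2 ≤ s / ε := by rw [le_div_iff₀ hε]; exact hs
    linarith
  have hd : ∀ s, HasDerivAt φ (deriv φ s) s := fun s =>
    (hC.differentiable one_ne_zero s).hasDerivAt
  have hdc : Continuous (deriv φ) := hC.continuous_deriv le_rfl
  have hdn : ∀ s, 0 ≤ deriv φ s := fun s => hmono.deriv_nonneg
  have hcc : Continuous (fun s => s * deriv φ s) := continuous_id.mul hdc
  have hΨd : ∀ s, HasDerivAt (fun s => ∫ σ in (0:ℝ)..s, σ * deriv φ σ) (s * deriv φ s) s :=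
    fun s => hcc.integral_hasStrictDerivAt 0 s |>.hasDerivAt
  have hlow : ∀ s, s < ε → deriv φ s = 0 := fun s hs => by
    have : φ =ᶠ[nhds s] fun _ => (0:ℝ) := by
      filter_upwards [gt_mem_nhds hs] with y hy
      exact h0 y hy.le
    rw [this.deriv_eq]; simp
  have hlow' : ∀ s, s ≤ ε → s * deriv φ s = 0 := by
    intro s hs
    rcases hs.lt_or_eq with h | h
    · simp [hlow s h]
    · have : IsLocalMin φ s := by
        filter_upwards with y
        rw [h0 s hs]; exact Real.smoothTransition.nonneg _
      simp [this.deriv_eq_zero]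
  have hhigh : ∀ s, 2 * ε < s → deriv φ s = 0 := fun s hs => by
    have : φ =ᶠ[nhds s] fun _ => (1:ℝ) := by
      filter_upwards [lt_mem_nhds hs] with y hy
      exact h1 y hy.le
    rw [this.deriv_eq]; simp
  have hzero : ∀ s, s ≤ ε → ∫ σ in (0:ℝ)..s, σ * deriv φ σ = 0 := by
    intro s hs
    rw [intervalIntegral.integral_congr (g := fun _ => (0:ℝ))]
    · simp
    · intro σ hσ
      apply hlow'
      have := hσ.2
      exact this.trans (sup_le hε.le hs)
  refine ⟨φ, deriv φ, fun s => ∫ σ in (0:ℝ)..s, σ * deriv φ σ, hC, ?_, hdc, hd, hΨd, hdn,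
    fun s => Real.smoothTransition.nonneg _, h0, h1, hzero, ?_, ?_⟩
  · rw [contDiff_one_iff_deriv]
    refine ⟨fun s => (hΨd s).differentiableAt, ?_⟩
    have : deriv (fun s => ∫ σ in (0:ℝ)..s, σ * deriv φ σ) = fun s => s * deriv φ s :=
      funext fun s => (hΨd s).deriv
    rw [this]; exact hcc
  · intro s
    rcases le_total s 0 with h | h
    · exact (hzero s (h.trans hε.le)).ge
    · exact intervalIntegral.integral_nonneg h fun u hu => mul_nonneg hu.1 (hdn u)
  · intro s
    rcases le_total s 0 with h | h
    · exact (hzero s (h.trans hε.le)).le.trans (by positivity)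
    · have : ∫ σ in (0:ℝ)..s, σ * deriv φ σ ≤ ∫ σ in (0:ℝ)..s, 2 * ε * deriv φ σ := by
        apply intervalIntegral.integral_mono_on h (hcc.intervalIntegrable _ _)
          ((continuous_const.mul hdc).intervalIntegrable _ _)
        intro σ _
        rcases le_or_gt σ (2 * ε) with h2 | h2
        · exact mul_le_mul_of_nonneg_right h2 (hdn σ)
        · simp [hhigh σ h2]
      refine this.trans ?_
      rw [intervalIntegral.integral_const_mul,
        intervalIntegral.integral_eq_sub_of_hasDerivAt (fun σ _ => hd σ)
          (hdc.intervalIntegrable _ _), h0 0 hε.le, sub_zero]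
      have : φ s ≤ 1 := Real.smoothTransition.le_one _
      nlinarith

theorem fixed_t_aux {d : ℕ} {O B : Set (EuclideanSpace ℝ (Fin d))} (hO : IsOpen O)
    (hObdd : Bornology.IsBounded O) (hB : IsCompact B) (hBO : B ⊆ O)
    {u v : EuclideanSpace ℝ (Fin d) → ℝ}
    (hu : ContinuousOn u (closure O)) (hu2 : ContDiffOn ℝ 2 u O)
    (hv : ContinuousOn v (closure O)) (hv2 : ContDiffOn ℝ 2 v O)
    (hub : ∀ x ∈ frontier O, u x = 0) (hvb : ∀ x ∈ frontier O, v x = 0)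
    (hvpos : ∀ x ∈ O, 0 < v x)
    (hlap : ∀ x ∈ O, v x ≤ u x → 0 ≤ v x * lap u x - u x * lap v x)
    (C : ℝ) (hC : 0 ≤ C) (hCl : ∀ x ∈ O, -C ≤ lap v x)
    (ε : ℝ) (hε : 0 < ε) (φ φ' Ψ : ℝ → ℝ)
    (hφ : ContDiff ℝ 1 φ) (hΨ : ContDiff ℝ 1 Ψ) (hφ'c : Continuous φ')
    (hφd : ∀ s, HasDerivAt φ (φ' s) s) (hΨd : ∀ s, HasDerivAt Ψ (s * φ' s) s)
    (hφ'0 : ∀ s, 0 ≤ φ' s) (hφ0 : ∀ s, 0 ≤ φ s) (hφl : ∀ s, s ≤ ε → φ s = 0)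
    (hΨl : ∀ s, s ≤ ε → Ψ s = 0) (hΨ0 : ∀ s, 0 ≤ Ψ s) (hΨ1 : ∀ s, Ψ s ≤ 2 * ε)
    (t : ℝ) (ht : 1 ≤ t) :
    ∫ x in B, φ' (u x - t * v x) * v x * ∑ i : Fin d,
      (fderiv ℝ u x (EuclideanSpace.single i (1 : ℝ))
        - t * fderiv ℝ v x (EuclideanSpace.single i (1 : ℝ))) ^ 2
      ≤ 2 * ε * C * volume.real O := by
  set e : Fin d → EuclideanSpace ℝ (Fin d) := fun i => EuclideanSpace.single i (1 : ℝ) with he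
  have hu1 : ContDiffOn ℝ 1 u O := hu2.of_le (by norm_num)
  have hv1 : ContDiffOn ℝ 1 v O := hv2.of_le (by norm_num)
  have hDu : ∀ i, ContDiffOn ℝ 1 (fun y => fderiv ℝ u y (e i)) O := fun i =>
    (hu2.fderiv_of_isOpen hO (m := 1) (by norm_num)).clm_apply contDiffOn_const
  have hDv : ∀ i, ContDiffOn ℝ 1 (fun y => fderiv ℝ v y (e i)) O := fun i =>
    (hv2.fderiv_of_isOpen hO (m := 1) (by norm_num)).clm_apply contDiffOn_const
  set w : EuclideanSpace ℝ (Fin d) → ℝ := fun x => u x - t * v x with hw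
  have hw1 : ContDiffOn ℝ 1 w O := hu1.sub (contDiffOn_const.mul hv1)
  set X : Fin d → EuclideanSpace ℝ (Fin d) → ℝ := fun i x =>
    φ (w x) * (v x * fderiv ℝ u x (e i) - u x * fderiv ℝ v x (e i))
      + Ψ (w x) * fderiv ℝ v x (e i) with hX
  have hXC : ∀ i, ContDiffOn ℝ 1 (X i) O := fun i =>
    ((hφ.comp_contDiffOn hw1).mul ((hv1.mul (hDu i)).sub (hu1.mul (hDv i)))).add
      ((hΨ.comp_contDiffOn hw1).mul (hDv i))
  set K := closure O ∩ w ⁻¹' Set.Ici ε with hKdef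
  have hcomp : IsCompact (closure O) := hObdd.isCompact_closure
  have hwc : ContinuousOn w (closure O) := hu.sub (continuousOn_const.mul hv)
  have hK : IsCompact K :=
    hcomp.of_isClosed_subset (hwc.preimage_isClosed_of_isClosed isClosed_closure isClosed_Ici)
      Set.inter_subset_left
  have hKO : K ⊆ O := by
    rintro x ⟨hx, hxe⟩
    by_contra hxO
    have hf : x ∈ frontier O := by rw [hO.frontier_eq]; exact ⟨hx, hxO⟩
    simp only [hw, Set.mem_preimage, Set.mem_Ici, hub x hf, hvb x hf] at hxe
    linarith
  have hXK : ∀ i, ∀ x ∈ O, x ∉ K → X i x = 0 := by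
    intro i x hx hxK
    have : w x ≤ ε := by
      by_contra h
      exact hxK ⟨subset_closure hx, (not_le.mp h).le⟩
    simp [hX, hφl _ this, hΨl _ this]
  have key := fun i => div_zero_aux hO hK hKO (hXC i) (hXK i) (e i)
  set D : EuclideanSpace ℝ (Fin d) → ℝ := fun x => ∑ i, fderiv ℝ (X i) x (e i) with hD
  have hDint : IntegrableOn D O := integrable_finsetSum _ fun i _ => (key i).1
  have hD0 : ∫ x in O, D x = 0 := by
    rw [hD, integral_finsetSum _ fun i _ => (key i).1]
    exact Finset.sum_eq_zero fun i _ => (key i).2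
  have hDeq : ∀ x ∈ O, D x = φ' (w x) * v x * ∑ i : Fin d,
      (fderiv ℝ u x (e i) - t * fderiv ℝ v x (e i)) ^ 2
      + φ (w x) * (v x * lap u x - u x * lap v x) + Ψ (w x) * lap v x := by
    intro x hx
    have hn := hO.mem_nhds hx
    have dui := ((hu1.contDiffAt hn).differentiableAt one_ne_zero).hasFDerivAt
    have dvi := ((hv1.contDiffAt hn).differentiableAt one_ne_zero).hasFDerivAt
    have dw : HasFDerivAt w (fderiv ℝ u x - t • fderiv ℝ v x) x := dui.sub (dvi.const_mul t)
    have dφ := (hφd (w x)).comp_hasFDerivAt x dw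
    have dΨ := (hΨd (w x)).comp_hasFDerivAt x dw
    have hXd : ∀ i, fderiv ℝ (X i) x (e i) =
        φ' (w x) * v x * (fderiv ℝ u x (e i) - t * fderiv ℝ v x (e i)) ^ 2
        + φ (w x) * (v x * fderiv ℝ (fun y => fderiv ℝ u y (e i)) x (e i)
            - u x * fderiv ℝ (fun y => fderiv ℝ v y (e i)) x (e i))
        + Ψ (w x) * fderiv ℝ (fun y => fderiv ℝ v y (e i)) x (e i) := by
      intro i
      have d2u := (((hDu i).contDiffAt hn).differentiableAt one_ne_zero).hasFDerivAt
      have d2v := (((hDv i).contDiffAt hn).differentiableAt one_ne_zero).hasFDerivAt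
      have := (dφ.mul ((dvi.mul d2u).sub (dui.mul d2v))).add (dΨ.mul d2v)
      have h2 : HasFDerivAt (X i) _ x := this
      rw [h2.fderiv]
      simp only [add_apply, smul_apply,
        sub_apply, smul_eq_mul, Function.comp_apply, Pi.sub_apply, Pi.mul_apply]
      simp only [hw]
      ring
    simp only [hD, hXd, lap, Finset.sum_add_distrib, ← Finset.mul_sum, Finset.sum_sub_distrib]
    rfl
  set A : EuclideanSpace ℝ (Fin d) → ℝ := fun x => φ' (w x) * v x * ∑ i : Fin d,
      (fderiv ℝ u x (e i) - t * fderiv ℝ v x (e i)) ^ 2 with hA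
  have hA0 : ∀ x ∈ O, 0 ≤ A x := fun x hx =>
    mul_nonneg (mul_nonneg (hφ'0 _) (hvpos x hx).le) (Finset.sum_nonneg fun i _ => sq_nonneg _)
  have hAle : ∀ x ∈ O, A x ≤ D x + 2 * ε * C := by
    intro x hx
    rw [hDeq x hx]
    have h1 : 0 ≤ φ (w x) * (v x * lap u x - u x * lap v x) := by
      rcases le_or_gt (w x) ε with h | h
      · simp [hφl _ h]
      · apply mul_nonneg (hφ0 _) (hlap x hx _)
        have := hvpos x hx
        simp only [hw] at h
        nlinarith
    have h2 : -(2 * ε * C) ≤ Ψ (w x) * lap v x := by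
      have a := hCl x hx
      have b := hΨ0 (w x)
      have c := hΨ1 (w x)
      nlinarith
    have : A x = φ' (w x) * v x * ∑ i : Fin d,
      (fderiv ℝ u x (e i) - t * fderiv ℝ v x (e i)) ^ 2 := rfl
    linarith
  have hAc : ContinuousOn A O := by
    refine ((hφ'c.comp_continuousOn hw1.continuousOn).mul hv1.continuousOn).mul ?_
    exact continuousOn_finsetSum _ fun i _ =>
      ((hDu i).continuousOn.sub (continuousOn_const.mul (hDv i).continuousOn)).pow 2
  have hfin : volume O ≠ ⊤ := hObdd.measure_lt_top.ne
  have hDC : IntegrableOn (fun x => D x + 2 * ε * C) O :=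
    hDint.add (integrableOn_const hfin)
  calc ∫ x in B, A x ≤ ∫ x in B, (D x + 2 * ε * C) :=
        setIntegral_mono_on ((hAc.mono hBO).integrableOn_compact hB) (hDC.mono_set hBO)
          hB.measurableSet fun x hx => hAle x (hBO hx)
    _ ≤ ∫ x in O, (D x + 2 * ε * C) := by
        apply setIntegral_mono_set hDC _ (Filter.Eventually.of_forall hBO)
        rw [Filter.EventuallyLE, ae_restrict_iff' hO.measurableSet]
        exact Filter.Eventually.of_forall fun x hx => (hA0 x hx).trans (hAle x hx)
    _ = 2 * ε * C * volume.real O := by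
        rw [integral_add hDint (integrableOn_const hfin), hD0]
        simp [mul_comm]

theorem grad_aux {d : ℕ} {O : Set (EuclideanSpace ℝ (Fin d))} (hO : IsOpen O)
    (hObdd : Bornology.IsBounded O)
    {u v : EuclideanSpace ℝ (Fin d) → ℝ}
    (hu : ContinuousOn u (closure O)) (hu2 : ContDiffOn ℝ 2 u O)
    (hv : ContinuousOn v (closure O)) (hv2 : ContDiffOn ℝ 2 v O)
    (hub : ∀ x ∈ frontier O, u x = 0) (hvb : ∀ x ∈ frontier O, v x = 0)
    (hvpos : ∀ x ∈ O, 0 < v x)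
    (hlap : ∀ x ∈ O, v x ≤ u x → 0 ≤ v x * lap u x - u x * lap v x)
    (C : ℝ) (hC : 0 ≤ C) (hCl : ∀ x ∈ O, -C ≤ lap v x)
    (x₀ : EuclideanSpace ℝ (Fin d)) (hx₀ : x₀ ∈ O) (hlt : v x₀ < u x₀) (i : Fin d) :
    fderiv ℝ u x₀ (EuclideanSpace.single i (1 : ℝ))
      - u x₀ / v x₀ * fderiv ℝ v x₀ (EuclideanSpace.single i (1 : ℝ)) = 0 := by
  by_contra hne
  set e : Fin d → EuclideanSpace ℝ (Fin d) := fun i => EuclideanSpace.single i (1 : ℝ) with he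
  have hcDu : ∀ i, ContinuousOn (fun y => fderiv ℝ u y (e i)) O := fun i =>
    ((hu2.continuousOn_fderiv_of_isOpen hO (by norm_num))).clm_apply continuousOn_const
  have hcDv : ∀ i, ContinuousOn (fun y => fderiv ℝ v y (e i)) O := fun i =>
    ((hv2.continuousOn_fderiv_of_isOpen hO (by norm_num))).clm_apply continuousOn_const
  have hcu : ContinuousOn u O := hu2.continuousOn
  have hcv : ContinuousOn v O := hv2.continuousOn
  set S : EuclideanSpace ℝ (Fin d) × ℝ → ℝ := fun z => ∑ i : Fin d,
      (fderiv ℝ u z.1 (e i) - z.2 * fderiv ℝ v z.1 (e i)) ^ 2 with hS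
  have hSc : ContinuousOn S (O ×ˢ Set.univ) := by
    refine continuousOn_finsetSum _ fun i _ => ContinuousOn.pow ?_ 2
    have hm : Set.MapsTo Prod.fst (O ×ˢ (Set.univ : Set ℝ)) O := fun z hz => hz.1
    exact ((hcDu i).comp continuousOn_fst hm).sub
      (continuousOn_snd.mul ((hcDv i).comp continuousOn_fst hm))
  set t₀ := u x₀ / v x₀ with ht₀
  have hv0 := hvpos x₀ hx₀
  have ht1 : 1 < t₀ := by rw [ht₀, one_lt_div hv0]; exact hlt
  have htv : t₀ * v x₀ = u x₀ := by rw [ht₀]; field_simp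
  have hS0 : 0 < S (x₀, t₀) := by
    refine lt_of_lt_of_le (b := (fderiv ℝ u x₀ (e i) - t₀ * fderiv ℝ v x₀ (e i)) ^ 2)
      (by positivity) ?_
    exact Finset.single_le_sum (f := fun i => (fderiv ℝ u x₀ (e i) - t₀ * fderiv ℝ v x₀ (e i)) ^ 2)
      (fun i _ => sq_nonneg _) (Finset.mem_univ i)
  set m := S (x₀, t₀) / 2 with hm
  have hm0 : 0 < m := by positivity
  have hSat : ContinuousAt S (x₀, t₀) :=
    hSc.continuousAt ((hO.prod isOpen_univ).mem_nhds ⟨hx₀, trivial⟩)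
  have hev : ∀ᶠ z in nhds (x₀, t₀), m < S z :=
    hSat.eventually (lt_mem_nhds (by rw [hm]; linarith))
  rw [nhds_prod_eq, Filter.eventually_prod_iff] at hev
  obtain ⟨pa, hpa, pb, hpb, hab⟩ := hev
  obtain ⟨δ₀, hδ₀, hpb⟩ := Metric.eventually_nhds_iff.mp hpb
  obtain ⟨δ, hδ, hδ1, hδ2⟩ : ∃ δ : ℝ, 0 < δ ∧ δ < δ₀ ∧ 1 ≤ t₀ - δ := by
    refine ⟨min (δ₀ / 2) (t₀ - 1), lt_min (by linarith) (by linarith), ?_, ?_⟩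
    · exact (min_le_left _ _).trans_lt (by linarith)
    · linarith [min_le_right (δ₀ / 2) (t₀ - 1)]
  set a := t₀ - δ with ha
  set b := t₀ + δ with hb
  have hab' : a ≤ b := by rw [ha, hb]; linarith
  set η := δ * v x₀ / 2 with hη
  have hη0 : 0 < η := by positivity
  have hua : ContinuousAt u x₀ := hcu.continuousAt (hO.mem_nhds hx₀)
  have hva : ContinuousAt v x₀ := hcv.continuousAt (hO.mem_nhds hx₀)
  have hδv : 0 < δ * v x₀ := by positivity
  have h1 : ∀ᶠ x in nhds x₀, η < u x - a * v x := by
    refine (hua.sub (continuousAt_const.mul hva)).eventually (lt_mem_nhds ?_)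
    change δ * v x₀ / 2 < u x₀ - (t₀ - δ) * v x₀
    nlinarith
  have h2 : ∀ᶠ x in nhds x₀, u x - b * v x < 0 := by
    refine (hua.sub (continuousAt_const.mul hva)).eventually (gt_mem_nhds ?_)
    change u x₀ - (t₀ + δ) * v x₀ < 0
    nlinarith
  obtain ⟨r₀, hr₀, hall⟩ := Metric.eventually_nhds_iff.mp
    (((hO.eventually_mem hx₀).and hpa).and (h1.and h2))
  set B := Metric.closedBall x₀ (r₀ / 2) with hB
  have hBc : IsCompact B := isCompact_closedBall _ _
  have hBall : ∀ x ∈ B, (x ∈ O ∧ pa x) ∧ (η < u x - a * v x ∧ u x - b * v x < 0) := by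
    intro x hx
    exact hall (lt_of_le_of_lt (Metric.mem_closedBall.mp hx) (by linarith))
  have hBO : B ⊆ O := fun x hx => (hBall x hx).1.1
  have hBpos : 0 < volume.real B := by
    rw [measureReal_def, ENNReal.toReal_pos_iff]
    exact ⟨Metric.measure_closedBall_pos _ _ (by linarith), hBc.measure_lt_top⟩
  -- main inequality for small ε
  have main : ∀ ε : ℝ, 0 < ε → 2 * ε ≤ η →
      m * volume.real B ≤ (b - a) * (2 * ε * C * volume.real O) := by
    intro ε hε hεη
    obtain ⟨φ, φ', Ψ, hφ, hΨ, hφ'c, hφd, hΨd, hφ'0, hφ0, hφl, hφh, hΨl, hΨ0, hΨ1⟩ :=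
      cutoff_aux ε hε
    set A : EuclideanSpace ℝ (Fin d) → ℝ → ℝ := fun x t =>
      φ' (u x - t * v x) * v x * S (x, t) with hA
    have hft : ∀ t ∈ Set.Icc a b, ∫ x in B, A x t ≤ 2 * ε * C * volume.real O := fun t ht =>
      fixed_t_aux hO hObdd hBc hBO hu hu2 hv hv2 hub hvb hvpos hlap C hC hCl ε hε φ φ' Ψ
        hφ hΨ hφ'c hφd hΨd hφ'0 hφ0 hφl hΨl hΨ0 hΨ1 t (hδ2.trans ht.1)
    have hAc : ContinuousOn (Function.uncurry A) (B ×ˢ Set.Icc a b) := by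
      have hmf : Set.MapsTo Prod.fst (B ×ˢ Set.Icc a b) O := fun z hz => hBO hz.1
      have cu := hcu.comp continuousOn_fst hmf
      have cv := hcv.comp continuousOn_fst hmf
      have cS : ContinuousOn S (B ×ˢ Set.Icc a b) :=
        hSc.mono (Set.prod_mono hBO (Set.subset_univ _))
      exact ((hφ'c.comp_continuousOn (cu.sub (continuousOn_snd.mul cv))).mul cv).mul cS
    have hAi : Integrable (Function.uncurry A)
        ((volume.restrict B).prod (volume.restrict (Set.Icc a b))) := by
      rw [Measure.prod_restrict]
      exact hAc.integrableOn_compact (hBc.prod isCompact_Icc)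
    have hswap := integral_integral_swap hAi
    have hlow : ∀ x ∈ B, m ≤ ∫ t in Set.Icc a b, A x t := by
      intro x hx
      obtain ⟨⟨hxO, hxa⟩, hx1, hx2⟩ := hBall x hx
      rw [integral_Icc_eq_integral_Ioc, ← intervalIntegral.integral_of_le hab']
      have hcl : Continuous fun t => φ' (u x - t * v x) * v x := by fun_prop
      have hint1 : ∫ t in a..b, φ' (u x - t * v x) * v x = 1 := by
        have hd : ∀ t : ℝ, HasDerivAt (fun t => -φ (u x - t * v x)) (φ' (u x - t * v x) * v x) t := by
          intro t
          have h0 : HasDerivAt (fun t => u x - t * v x) (-(1 * v x)) t :=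
            ((hasDerivAt_id t).mul_const (v x)).const_sub (u x)
          have := ((hφd (u x - t * v x)).comp t h0).neg
          have h5 : HasDerivAt (fun t => -φ (u x - t * v x)) _ t := this
          exact h5.congr_deriv (by ring)
        rw [intervalIntegral.integral_eq_sub_of_hasDerivAt (fun t _ => hd t)
          (hcl.intervalIntegrable _ _), hφl _ (by linarith), hφh (u x - a * v x) (by linarith)]
        ring
      have hcA : ContinuousOn (fun t => A x t) (Set.Icc a b) :=
        hAc.comp (f := fun t => (x, t)) (by fun_prop) fun t ht => ⟨hx, ht⟩
      calc m = ∫ t in a..b, m * (φ' (u x - t * v x) * v x) := by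
            rw [intervalIntegral.integral_const_mul, hint1, mul_one]
        _ ≤ ∫ t in a..b, A x t := by
            apply intervalIntegral.integral_mono_on hab'
              ((continuous_const.mul hcl).intervalIntegrable _ _)
              (hcA.intervalIntegrable_of_Icc hab')
            intro t ht
            have hSt : m < S (x, t) := by
              refine hab hxa (hpb ?_)
              rw [Real.dist_eq, abs_lt]
              constructor <;> linarith [ht.1, ht.2]
            have : 0 ≤ φ' (u x - t * v x) * v x := mul_nonneg (hφ'0 _) (hvpos x hxO).le
            change m * (φ' (u x - t * v x) * v x) ≤ φ' (u x - t * v x) * v x * S (x, t)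
            nlinarith
    calc m * volume.real B = ∫ x in B, m := by simp [mul_comm]
      _ ≤ ∫ x in B, ∫ t in Set.Icc a b, A x t :=
          setIntegral_mono_on (integrableOn_const hBc.measure_lt_top.ne)
            hAi.integral_prod_left hBc.measurableSet hlow
      _ = ∫ t in Set.Icc a b, ∫ x in B, A x t := hswap
      _ ≤ ∫ t in Set.Icc a b, 2 * ε * C * volume.real O :=
          setIntegral_mono_on hAi.integral_prod_right
            (integrableOn_const isCompact_Icc.measure_lt_top.ne) measurableSet_Icc hft
      _ = (b - a) * (2 * ε * C * volume.real O) := by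
          simp [Measure.real, ENNReal.toReal_ofReal (sub_nonneg.2 hab')]
  set Q := (b - a) * (2 * C * volume.real O) with hQ
  have hQ0 : 0 ≤ Q := by
    have : 0 ≤ b - a := by linarith
    positivity
  have hmB : 0 < m * volume.real B := by positivity
  set ε := min (η / 2) (m * volume.real B / (2 * (Q + 1))) with hεd
  have hε : 0 < ε := by positivity
  have h := main ε hε (by linarith [min_le_left (η / 2) (m * volume.real B / (2 * (Q + 1)))])
  have h' : ε * (2 * (Q + 1)) ≤ m * volume.real B := by
    rw [← le_div_iff₀ (by positivity)]
    exact min_le_right _ _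
  have h'' : (b - a) * (2 * ε * C * volume.real O) = ε * Q := by rw [hQ]; ring
  nlinarith

/-- Let `O ⊆ ℝ^d` be a bounded, connected, open set with `C²` boundary,
`p ≥ 2` and `λ > 0`. If `u₁, u₂` are continuous on `closure O`, `C²` on `O`, and each
satisfies `Δu − u^{p−1} + λu = 0` and `u > 0` in `O`, `u = 0` on `∂O`, and
`∫_O u² = 1`, then `u₁ = u₂` on `closure O`. -/
theorem uniqueness_of_positive_stationary_solution (d : ℕ)
    (O : Set (EuclideanSpace ℝ (Fin d))) (hO : IsOpen O)
    (hObdd : Bornology.IsBounded O) (hOconn : IsConnected O) (hOC2 : IsC2Boundary O)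
    (p : ℝ) (hp : 2 ≤ p) (lam : ℝ) (hlam : 0 < lam)
    (u₁ u₂ : EuclideanSpace ℝ (Fin d) → ℝ)
    (h₁cont : ContinuousOn u₁ (closure O)) (h₁C2 : ContDiffOn ℝ 2 u₁ O)
    (h₂cont : ContinuousOn u₂ (closure O)) (h₂C2 : ContDiffOn ℝ 2 u₂ O)
    (h₁eq : ∀ x ∈ O, lap u₁ x - u₁ x ^ (p - 1) + lam * u₁ x = 0)
    (h₂eq : ∀ x ∈ O, lap u₂ x - u₂ x ^ (p - 1) + lam * u₂ x = 0)
    (h₁pos : ∀ x ∈ O, 0 < u₁ x) (h₂pos : ∀ x ∈ O, 0 < u₂ x)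
    (h₁bd : ∀ x ∈ frontier O, u₁ x = 0) (h₂bd : ∀ x ∈ frontier O, u₂ x = 0)
    (h₁mass : ∫ x in O, (u₁ x) ^ 2 = 1) (h₂mass : ∫ x in O, (u₂ x) ^ 2 = 1) :
    Set.EqOn u₁ u₂ (closure O) := by
  have hq : 1 ≤ p - 1 := by linarith
  have hlapgen : ∀ a b : ℝ, 0 < b → b ≤ a → 0 ≤ b * a ^ (p - 1) - a * b ^ (p - 1) := by
    intro a b hb hba
    have ha : 0 < a := hb.trans_le hba
    have e1 : a ^ (p - 1) = a ^ (p - 2) * a := by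
      rw [← Real.rpow_add_one ha.ne']; congr 1; ring
    have e2 : b ^ (p - 1) = b ^ (p - 2) * b := by
      rw [← Real.rpow_add_one hb.ne']; congr 1; ring
    have h := Real.rpow_le_rpow hb.le hba (by linarith : 0 ≤ p - 2)
    rw [e1, e2]
    have : 0 < a * b := by positivity
    nlinarith
  have hbound : ∀ u : EuclideanSpace ℝ (Fin d) → ℝ, ContinuousOn u (closure O) →
      (∀ x ∈ O, lap u x - u x ^ (p - 1) + lam * u x = 0) → (∀ x ∈ O, 0 < u x) →
      ∃ C : ℝ, 0 ≤ C ∧ ∀ x ∈ O, -C ≤ lap u x := by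
    intro u hu heq hpos
    obtain ⟨M, hM⟩ := hObdd.isCompact_closure.exists_bound_of_continuousOn hu
    obtain ⟨y, hy⟩ := hOconn.nonempty
    have hM0 : 0 ≤ M := (norm_nonneg _).trans (hM y (subset_closure hy))
    refine ⟨lam * M, by positivity, fun x hx => ?_⟩
    have h1 := heq x hx
    have h2 : 0 ≤ u x ^ (p - 1) := Real.rpow_nonneg (hpos x hx).le _
    have h3 : u x ≤ M := (le_abs_self _).trans (hM x (subset_closure hx))
    nlinarith
  have hgrad : ∀ u v : EuclideanSpace ℝ (Fin d) → ℝ, ContinuousOn u (closure O) →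
      ContDiffOn ℝ 2 u O → ContinuousOn v (closure O) → ContDiffOn ℝ 2 v O →
      (∀ x ∈ O, lap u x - u x ^ (p - 1) + lam * u x = 0) →
      (∀ x ∈ O, lap v x - v x ^ (p - 1) + lam * v x = 0) →
      (∀ x ∈ O, 0 < v x) →
      (∀ x ∈ frontier O, u x = 0) → (∀ x ∈ frontier O, v x = 0) →
      ∀ x ∈ O, v x < u x → ∀ i : Fin d,
        v x * fderiv ℝ u x (EuclideanSpace.single i (1 : ℝ))
          = u x * fderiv ℝ v x (EuclideanSpace.single i (1 : ℝ)) := by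
    intro u v hu hu2 hv hv2 hue hve hvp hub hvb x hx hlt i
    obtain ⟨C, hC, hCl⟩ := hbound v hv hve hvp
    have h := grad_aux hO hObdd hu hu2 hv hv2 hub hvb hvp (fun y hy hle => by
      have a := hlapgen (u y) (v y) (hvp y hy) hle
      have b : lap u y = u y ^ (p - 1) - lam * u y := by linarith [hue y hy]
      have c : lap v y = v y ^ (p - 1) - lam * v y := by linarith [hve y hy]
      rw [b, c]; nlinarith) C hC hCl x hx hlt i
    have hv0 := (hvp x hx).ne'
    field_simp at h
    linarith
  have hd1 : DifferentiableOn ℝ u₁ O := h₁C2.differentiableOn (by norm_num)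
  have hd2 : DifferentiableOn ℝ u₂ O := h₂C2.differentiableOn (by norm_num)
  have hgrad' : ∀ x ∈ O, u₁ x ≠ u₂ x → u₂ x • fderiv ℝ u₁ x = u₁ x • fderiv ℝ u₂ x := by
    intro x hx hne
    have hb : ∀ i : Fin d, u₂ x * fderiv ℝ u₁ x (EuclideanSpace.single i (1 : ℝ))
          = u₁ x * fderiv ℝ u₂ x (EuclideanSpace.single i (1 : ℝ)) := by
      intro i
      rcases lt_or_gt_of_ne hne with h | h
      · exact (hgrad u₂ u₁ h₂cont h₂C2 h₁cont h₁C2 h₂eq h₁eq h₁pos h₂bd h₁bd x hx h i).symm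
      · exact hgrad u₁ u₂ h₁cont h₁C2 h₂cont h₂C2 h₁eq h₂eq h₂pos h₁bd h₂bd x hx h i
    apply ContinuousLinearMap.coe_injective
    refine (EuclideanSpace.basisFun (Fin d) ℝ).toBasis.ext fun i => ?_
    simpa using hb i
  set f : EuclideanSpace ℝ (Fin d) → ℝ := fun x => (u₁ x * (u₂ x)⁻¹ - 1) ^ 3 with hf
  have hfd : ∀ x ∈ O, HasFDerivAt f (0 : EuclideanSpace ℝ (Fin d) →L[ℝ] ℝ) x := by
    intro x hx
    have d1 := (hd1.differentiableAt (hO.mem_nhds hx)).hasFDerivAt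
    have d2 := (hd2.differentiableAt (hO.mem_nhds hx)).hasFDerivAt
    have hv0 := (h₂pos x hx).ne'
    have di := (hasDerivAt_inv hv0).comp_hasFDerivAt x d2
    have h3 := ((d1.mul di).sub_const 1).pow 3
    have h4 : HasFDerivAt f _ x := h3
    refine h4.congr_fderiv ?_
    ext y
    by_cases hne : u₁ x = u₂ x
    · simp [hne, hv0]
    · have := congrArg (fun L => L y) (hgrad' x hx hne)
      simp only [smul_apply, smul_eq_mul] at this
      simp
      have h5 : (u₂ x)⁻¹ * (fderiv ℝ u₁ x) y = u₁ x * ((u₂ x ^ 2)⁻¹ * (fderiv ℝ u₂ x) y) := by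
        field_simp
        linarith
      rw [h5]; ring
  obtain ⟨y, hy⟩ := hOconn.nonempty
  have hconst : ∀ x ∈ O, f x = f y := fun x hx =>
    hO.is_const_of_fderiv_eq_zero hOconn.isPreconnected
      (fun z hz => (hfd z hz).differentiableAt.differentiableWithinAt)
      (fun z hz => (hfd z hz).fderiv) hx hy
  set c := u₁ y * (u₂ y)⁻¹ with hc
  have hc0 : 0 < c := mul_pos (h₁pos y hy) (inv_pos.2 (h₂pos y hy))
  have huc : ∀ x ∈ O, u₁ x = c * u₂ x := by
    intro x hx
    have h := hconst x hx
    have h2 : u₁ x * (u₂ x)⁻¹ - 1 = c - 1 := (Odd.strictMono_pow (n := 3) (by decide)).injective h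
    have h3 : u₁ x * (u₂ x)⁻¹ = c := by linarith
    rw [← h3, mul_assoc, inv_mul_cancel₀ (h₂pos x hx).ne', mul_one]
  have hc1 : c = 1 := by
    have : ∫ x in O, u₁ x ^ 2 = ∫ x in O, c ^ 2 * u₂ x ^ 2 :=
      setIntegral_congr_fun hO.measurableSet fun x hx => by
        simp only [huc x hx]; ring
    rw [integral_const_mul, h₁mass, h₂mass] at this
    nlinarith
  intro x hx
  by_cases hxO : x ∈ O
  · rw [huc x hxO, hc1, one_mul]
  · have hfr : x ∈ frontier O := by rw [hO.frontier_eq]; exact ⟨hx, hxO⟩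
    rw [h₁bd x hfr, h₂bd x hfr]
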